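/- Let γ_1 be a nonzero real number and r a real number, and consider the 3-point DRP scheme with S(φ) = γ_1 sin(φ), whose numerical group velocity is V_g(φ) = −2 γ_1 cos(φ) / (1 + 4 r² γ_1² sin²(φ)). Then for every real φ, the derivative dV_g/dφ(φ) = 0 if and only if sin(φ) = 0. In particular the 3-point DRP scheme admits spurious caustics, at the reduced wavenumbers φ_c ∈ πℤ. -/

import Mathlib

/-!
Differentiating gives
`V_g'(φ) = 2 γ₁ sin φ (1 + 4 r² γ₁² (sin² φ + 2 cos² φ)) / (1 + 4 r² γ₁² sin² φ)²`.
Every factor other than `sin φ` is nonzero, since the bracket and the denominator are at least `1`.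
-/

open Real

theorem stmt_15 (γ1 r : ℝ) (hγ1 : γ1 ≠ 0)
    (Vg : ℝ → ℝ)
    (hVg : ∀ φ, Vg φ = -2 * γ1 * Real.cos φ / (1 + 4 * r^2 * γ1^2 * (Real.sin φ)^2)) :
    (∀ φ : ℝ, deriv Vg φ = 0 ↔ Real.sin φ = 0) ∧ ∀ n : ℤ, deriv Vg ((n:ℝ) * π) = 0 := by
  have key : ∀ φ : ℝ, deriv Vg φ = 0 ↔ Real.sin φ = 0 := by
    intro φ
    have hD : 1 + 4 * r^2 * γ1^2 * (Real.sin φ)^2 ≠ 0 := by positivity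
    have hB : 1 + 4 * r^2 * γ1^2 * ((Real.sin φ)^2 + 2 * (Real.cos φ)^2) ≠ 0 := by positivity
    have hderiv : deriv Vg φ =
        2 * γ1 * Real.sin φ * (1 + 4 * r^2 * γ1^2 * ((Real.sin φ)^2 + 2 * (Real.cos φ)^2)) /
          (1 + 4 * r^2 * γ1^2 * (Real.sin φ)^2)^2 := by
      rw [funext hVg]
      have hnum := (Real.hasDerivAt_cos φ).const_mul (-2 * γ1)
      have hden := (((Real.hasDerivAt_sin φ).fun_pow 2).const_mul (4 * r^2 * γ1^2)).const_add 1
      rw [(hnum.fun_div hden hD).deriv]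
      congr 1
      push_cast
      ring
    rw [hderiv]
    simp [hγ1, hD, hB]
  exact ⟨key, fun n => (key _).2 (Real.sin_int_mul_pi n)⟩
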